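/- For all γ₁, γ₂, γ₃, γ₄ ∈ ℂ, the operators K := (1/2)K₁, K₊ := K₂ + (1/2)K₃ − (γ₂/2 − 2γ₄)K₁², K₋ := K₂ − (1/2)K₃ − (γ₂/2 − 2γ₄)K₁² satisfy ⁅K, K₊⁆ = K₊, ⁅K, K₋⁆ = −K₋, ⁅K₋, K₊⁆ = 2(γ₁² + 2iγ₁γ₂ − 4γ₁γ₃ − 8iγ₁γ₄ + 2(γ₂ + 3iγ₃ − 8γ₄)Ĥ₄)K + 16(γ₂² + 2γ₃² − 2γ₁γ₃ − 6iγ₁γ₄ + 2iγ₂γ₃ − 8γ₂γ₄ + 4iγ₃γ₄ − 2γ₄Ĥ₄)K³ + 32(3γ₃² + 16γ₄² − 6γ₂γ₄ + 6iγ₃γ₄)K⁵ + 512γ₄²K⁷ (a seventh-order polynomial Higgs algebra), and the structure-function factorization K₊K₋ = Φ₁(Ĥ₄,K)·Φ₂(Ĥ₄,K) with ⁅Φ₁(Ĥ₄,K), Φ₂(Ĥ₄,K)⁆ = 0, where Φ₁(Ĥ₄,K) := (1/4)(Ĥ₄ − 2iγ₁K + 4γ₂K² + 8iγ₃K³ −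 16γ₄K⁴) and Φ₂(Ĥ₄,K) := Ĥ₄ + 2iγ₁(K − Id) + 4γ₂(K − Id)² − 8iγ₃(K − Id)³ − 16γ₄(K − Id)⁴. -/

import Mathlib

noncomputable section

/-- `V = ℂ[q₁,q₂]`, the polynomial ring in two variables over `ℂ`. -/
abbrev V : Type := MvPolynomial (Fin 2) ℂ

/-- `q̂₁`: multiplication by `q₁`. -/
noncomputable def q1 : Module.End ℂ V := LinearMap.mulLeft ℂ (MvPolynomial.X 0)

/-- `q̂₂`: multiplication by `q₂`. -/
noncomputable def q2 : Module.End ℂ V := LinearMap.mulLeft ℂ (MvPolynomial.X 1)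

/-- `p̂₁ = −i ∂/∂q₁`. -/
noncomputable def p1 : Module.End ℂ V :=
  (-Complex.I) • (MvPolynomial.pderiv (0 : Fin 2)).toLinearMap

/-- `p̂₂ = −i ∂/∂q₂`. -/
noncomputable def p2 : Module.End ℂ V :=
  (-Complex.I) • (MvPolynomial.pderiv (1 : Fin 2)).toLinearMap

/-- `D = q̂₁p̂₁ + q̂₂p̂₂`. -/
noncomputable def Dop : Module.End ℂ V := q1 * p1 + q2 * p2

/-- `Ĉ = q̂₁p̂₂ − q̂₂p̂₁`, the quantum angular momentum. -/
noncomputable def Cop : Module.End ℂ V := q1 * p2 - q2 * p1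

/-- `Ĥ₄ = p̂₁² + p̂₂² + γ₁D + γ₂D² + γ₃D³ + γ₄D⁴`. -/
noncomputable def H4 (γ₁ γ₂ γ₃ γ₄ : ℂ) : Module.End ℂ V :=
  p1 ^ 2 + p2 ^ 2 + γ₁ • Dop + γ₂ • Dop ^ 2 + γ₃ • Dop ^ 3 + γ₄ • Dop ^ 4

/-- `Î₄`, the fourth-order quantum symmetry of `Ĥ₄`. -/
noncomputable def I4 (γ₁ γ₂ γ₃ γ₄ : ℂ) : Module.End ℂ V :=
  p2 ^ 2 + γ₁ • (q2 * p2) + γ₂ • ((q1 ^ 2 + q2 ^ 2) * p2 ^ 2 - Cop ^ 2)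
    + γ₃ • (q2 ^ 3 * (p2 ^ 3 - p1 ^ 2 * p2) + (q1 ^ 3 + 3 * (q1 * q2 ^ 2)) * (p1 * p2 ^ 2)
        - (3 * Complex.I) • (q2 ^ 2 * p2 ^ 2) - (3 * Complex.I) • (q1 * q2 * p1 * p2)
        - q2 * p2)
    + γ₄ • ((q2 ^ 4 - q1 ^ 4) * (p2 ^ 4 - p1 ^ 2 * p2 ^ 2)
        + 4 * ((q1 ^ 3 * q2 + q1 * q2 ^ 3) * (p1 * p2 ^ 3))
        - (6 * Complex.I) • ((q2 ^ 3 + q1 ^ 2 * q2) * p2 ^ 3)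
        - (6 * Complex.I) • ((q1 ^ 3 + q1 * q2 ^ 2) * (p1 * p2 ^ 2))
        - 4 * ((q1 ^ 2 + q2 ^ 2) * p2 ^ 2) + 4 * Cop ^ 2)

/-- `Î₄′`, the fourth-order quantum symmetry of `Ĥ₄`. -/
noncomputable def I4' (γ₁ γ₂ γ₃ γ₄ : ℂ) : Module.End ℂ V :=
  p1 ^ 2 + γ₁ • (q1 * p1) + γ₂ • ((q1 ^ 2 + q2 ^ 2) * p1 ^ 2)
    + γ₃ • (q1 ^ 3 * (p1 ^ 3 - p1 * p2 ^ 2) + (q2 ^ 3 + 3 * (q1 ^ 2 * q2)) * (p1 ^ 2 * p2)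
        - (3 * Complex.I) • (q1 ^ 2 * p1 ^ 2) - (3 * Complex.I) • (q1 * q2 * p1 * p2)
        - q1 * p1)
    + γ₄ • ((q1 ^ 4 - q2 ^ 4) * (p1 ^ 4 - p1 ^ 2 * p2 ^ 2)
        + 4 * ((q1 * q2 ^ 3 + q1 ^ 3 * q2) * (p1 ^ 3 * p2))
        - (6 * Complex.I) • ((q1 ^ 3 + q1 * q2 ^ 2) * p1 ^ 3)
        - (6 * Complex.I) • ((q2 ^ 3 + q1 ^ 2 * q2) * (p1 ^ 2 * p2))
        - 4 * ((q1 ^ 2 + q2 ^ 2) * p1 ^ 2))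

/-- `K₁ = Ĉ`. -/
noncomputable def K1 : Module.End ℂ V := Cop

/-- `K₂ = (1/2)(Î₄′ − Î₄)`. -/
noncomputable def K2 (γ₁ γ₂ γ₃ γ₄ : ℂ) : Module.End ℂ V :=
  ((1 : ℂ)/2) • (I4' γ₁ γ₂ γ₃ γ₄ - I4 γ₁ γ₂ γ₃ γ₄)

/-- `K₃ = ⁅K₁, K₂⁆`. -/
noncomputable def K3 (γ₁ γ₂ γ₃ γ₄ : ℂ) : Module.End ℂ V :=
  K1 * K2 γ₁ γ₂ γ₃ γ₄ - K2 γ₁ γ₂ γ₃ γ₄ * K1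

/-- The number operator `K = (1/2)K₁`. -/
noncomputable def Kop : Module.End ℂ V := ((1 : ℂ)/2) • K1

/-- The raising operator `K₊ = K₂ + (1/2)K₃ − (γ₂/2 − 2γ₄)K₁²`. -/
noncomputable def Kplus (γ₁ γ₂ γ₃ γ₄ : ℂ) : Module.End ℂ V :=
  K2 γ₁ γ₂ γ₃ γ₄ + ((1 : ℂ)/2) • K3 γ₁ γ₂ γ₃ γ₄ - (γ₂/2 - 2*γ₄) • K1 ^ 2

/-- The lowering operator `K₋ = K₂ − (1/2)K₃ − (γ₂/2 − 2γ₄)K₁²`. -/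
noncomputable def Kminus (γ₁ γ₂ γ₃ γ₄ : ℂ) : Module.End ℂ V :=
  K2 γ₁ γ₂ γ₃ γ₄ - ((1 : ℂ)/2) • K3 γ₁ γ₂ γ₃ γ₄ - (γ₂/2 - 2*γ₄) • K1 ^ 2

/-- `Φ₁(Ĥ₄,K) = (1/4)(Ĥ₄ − 2iγ₁K + 4γ₂K² + 8iγ₃K³ − 16γ₄K⁴)`. -/
noncomputable def Phi1op (γ₁ γ₂ γ₃ γ₄ : ℂ) : Module.End ℂ V :=
  ((1 : ℂ)/4) • (H4 γ₁ γ₂ γ₃ γ₄ - (2 * Complex.I * γ₁) • Kop + (4 * γ₂) • Kop ^ 2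
    + (8 * Complex.I * γ₃) • Kop ^ 3 - (16 * γ₄) • Kop ^ 4)

/-- `Φ₂(Ĥ₄,K) = Ĥ₄ + 2iγ₁(K − Id) + 4γ₂(K − Id)² − 8iγ₃(K − Id)³ − 16γ₄(K − Id)⁴`. -/
noncomputable def Phi2op (γ₁ γ₂ γ₃ γ₄ : ℂ) : Module.End ℂ V :=
  H4 γ₁ γ₂ γ₃ γ₄ + (2 * Complex.I * γ₁) • (Kop - 1) + (4 * γ₂) • (Kop - 1) ^ 2
    - (8 * Complex.I * γ₃) • (Kop - 1) ^ 3 - (16 * γ₄) • (Kop - 1) ^ 4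

/-!
In the complex coordinates `z = q₁ + i q₂`, `w = q₁ - i q₂` the Hamiltonian becomes
`H = -4 ∂_z ∂_w + F(E)`, where `E = z ∂_z + w ∂_w` is the Euler operator and `F` a polynomial, and
the angular momentum `d = z ∂_z - w ∂_w` commutes with it. Let `Δ` be the divided difference of `F`
between `E` and `-d`. Since `E + d = 2 z ∂_z`, the operator `S = Δ z - 2 ∂_w` satisfies
`2 S ∂_z = F(E) - F(-d) - 4 ∂_z ∂_w = H - F(-d)`. The operators `K₊` and `K₋` are `T₊ = S ∂_w` and
its mirror image `T₋` under `z ↔ w`; they shift `d` by `2` and `-2`. A mirrored computation gives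
`2 ∂_w T₋ = ∂_z (H - F(d - 2))`, so that `4 T₊ T₋ = (H - F(-d)) (H - F(d - 2))`. Exchanging `z` and
`w` replaces `d` by `-d` and gives `4 T₋ T₊`; the commutator is then the difference of two
polynomials in the commuting operators `H` and `d`.
-/

section PolynomialCalculus

open Polynomial

variable {R A : Type*} [CommRing R] [Ring A] [Algebra R A]

theorem semiconjBy_aeval {t x y : A} (h : SemiconjBy t x y) (F : R[X]) :
    SemiconjBy t (aeval x F) (aeval y F) := by
  induction F using Polynomial.induction_on' with
  | add F G hF hG => simpa only [map_add] using hF.add_right hG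
  | monomial n c =>
    simpa only [aeval_monomial] using
      (show SemiconjBy t _ _ from Algebra.commute_algebraMap_right c t).mul_right (h.pow_right n)

theorem commute_aeval_right {x y : A} (h : Commute x y) (F : R[X]) : Commute x (aeval y F) :=
  semiconjBy_aeval h F

theorem exists_polynomial_algHom_of_commute {x y : A} (h : Commute x y) :
    ∃ φ : R[X][X] →ₐ[R] A, φ (C X) = x ∧ φ X = y :=
  ⟨eval₂AlgHom (aeval x) y fun F => (commute_aeval_right h.symm F).symm,
    (eval₂_C _ _).trans (aeval_X x), eval₂_X _ _⟩

/-- The divided difference `(F(x) - F(y)) / (x - y)` of a polynomial, expanded as a polynomial in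
`x` and `y` so that it makes sense in any algebra. -/
def dividedDifference (x y : A) : R[X] →ₗ[R] A :=
  lsum fun n => LinearMap.toSpanSingleton R A (∑ i ∈ Finset.range n, x ^ i * y ^ (n - 1 - i))

theorem dividedDifference_monomial (x y : A) (n : ℕ) (c : R) :
    dividedDifference x y (monomial n c)
      = c • ∑ i ∈ Finset.range n, x ^ i * y ^ (n - 1 - i) := by
  simp [dividedDifference, lsum, sum_monomial_index]

theorem dividedDifference_X_pow (x y : A) (n : ℕ) :
    dividedDifference x y (X ^ n : R[X]) = ∑ i ∈ Finset.range n, x ^ i * y ^ (n - 1 - i) := by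
  rw [← monomial_one_right_eq_X_pow, dividedDifference_monomial, one_smul]

theorem dividedDifference_mul_sub {x y : A} (h : Commute x y) (F : R[X]) :
    dividedDifference x y F * (x - y) = aeval x F - aeval y F := by
  induction F using Polynomial.induction_on' with
  | add F G hF hG => rw [map_add, add_mul, hF, hG, map_add, map_add]; abel
  | monomial n c =>
    rw [dividedDifference_monomial, smul_mul_assoc, h.geom_sum₂_mul, aeval_monomial,
      aeval_monomial, ← Algebra.smul_def, ← Algebra.smul_def, smul_sub]

theorem semiconjBy_dividedDifference {t x y x' y' : A} (hx : SemiconjBy t x x')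
    (hy : SemiconjBy t y y') (F : R[X]) :
    SemiconjBy t (dividedDifference x y F) (dividedDifference x' y' F) := by
  induction F using Polynomial.induction_on' with
  | add F G hF hG => simpa only [map_add] using hF.add_right hG
  | monomial n c =>
    simp only [dividedDifference_monomial, Algebra.smul_def, SemiconjBy, mul_assoc,
      Finset.mul_sum, Finset.sum_mul]
    refine Finset.sum_congr rfl fun i _ => ?_
    rw [Algebra.left_comm, ((hx.pow_right i).mul_right (hy.pow_right (n - 1 - i))).eq, mul_assoc]

end PolynomialCalculus

/-- Two commuting copies of the Weyl algebra relations: `a` and `b` behave as `∂/∂z` and `∂/∂w`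
in independent coordinates `z` and `w`. -/
structure IsWeylPair {A : Type*} [Ring A] (z w a b : A) : Prop where
  commute_z_w : Commute z w
  commute_a_b : Commute a b
  commute_a_w : Commute a w
  commute_b_z : Commute b z
  a_mul_z : a * z = z * a + 1
  b_mul_w : b * w = w * b + 1

section Ladder

open Polynomial

variable {R A : Type*} [CommRing R] [Ring A] [Algebra R A]

/-- The Euler operator `z ∂/∂z + w ∂/∂w`. -/
def euler (z w a b : A) : A := z * a + w * b

/-- The angular momentum `z ∂/∂z - w ∂/∂w`. -/
def angular (z w a b : A) : A := z * a - w * b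

/-- The Hamiltonian `-4 ∂²/∂z∂w + F(z ∂/∂z + w ∂/∂w)`: minus the Laplacian, perturbed by a
polynomial in the Euler operator. -/
def hamiltonian (F : R[X]) (z w a b : A) : A := aeval (euler z w a b) F - 4 • (a * b)

/-- The operator `T₊ = (Δ z - 2 ∂/∂w) ∂/∂w`, where `Δ` is the divided difference of `F` between the
Euler operator and minus the angular momentum. Exchanging the two Weyl pairs gives its partner
`T₋`; both shift the angular momentum by `±2`. -/
def ladder (F : R[X]) (z w a b : A) : A :=
  (dividedDifference (euler z w a b) (-angular z w a b) F * z - 2 • b) * b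

/-- The part of the ladder operator that is linear in `F`, as a linear map on polynomials. -/
def ladderDrift (z w a b : A) : R[X] →ₗ[R] A :=
  LinearMap.mulRight R (z * b) ∘ₗ dividedDifference (euler z w a b) (-angular z w a b)

variable {z w a b : A}

theorem ladder_eq_ladderDrift_sub (F : R[X]) (z w a b : A) :
    ladder F z w a b = ladderDrift z w a b F - 2 • b ^ 2 := by
  rw [ladder, sub_mul, mul_assoc, smul_mul_assoc, ← pow_two, ladderDrift, LinearMap.comp_apply,
    LinearMap.mulRight_apply]

theorem ladderDrift_X_pow (z w a b : A) (n : ℕ) :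
    ladderDrift z w a b (X ^ n : R[X])
      = (∑ i ∈ Finset.range n, euler z w a b ^ i * (-angular z w a b) ^ (n - 1 - i)) * (z * b) := by
  rw [ladderDrift, LinearMap.comp_apply, dividedDifference_X_pow, LinearMap.mulRight_apply]

theorem ladderDrift_X (z w a b : A) : ladderDrift z w a b (X : R[X]) = z * b := by
  rw [← pow_one (X : R[X]), ladderDrift_X_pow]
  simp

theorem euler_swap (z w a b : A) : euler w z b a = euler z w a b := add_comm _ _

theorem angular_swap (z w a b : A) : angular w z b a = -angular z w a b := (neg_sub _ _).symm

theorem euler_add_angular (z w a b : A) : euler z w a b + angular z w a b = 2 • (z * a) := by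
  rw [euler, angular]; abel

namespace IsWeylPair

theorem swap (h : IsWeylPair z w a b) : IsWeylPair w z b a :=
  ⟨h.commute_z_w.symm, h.commute_a_b.symm, h.commute_b_z,
    h.commute_a_w, h.b_mul_w, h.a_mul_z⟩

theorem semiconjBy_a_numberZ (h : IsWeylPair z w a b) : SemiconjBy a (z * a) (z * a + 1) := by
  rw [SemiconjBy, ← mul_assoc, h.a_mul_z]

theorem commute_a_numberW (h : IsWeylPair z w a b) : Commute a (w * b) :=
  h.commute_a_w.mul_right h.commute_a_b

theorem semiconjBy_z_numberZ (h : IsWeylPair z w a b) : SemiconjBy z (z * a) (z * a - 1) := by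
  rw [SemiconjBy, sub_mul, mul_assoc z a z, h.a_mul_z, mul_add, mul_one, one_mul,
    add_sub_cancel_right]

theorem commute_z_numberW (h : IsWeylPair z w a b) : Commute z (w * b) :=
  h.commute_z_w.mul_right h.commute_b_z.symm

theorem commute_numbers (h : IsWeylPair z w a b) : Commute (z * a) (w * b) :=
  h.commute_z_numberW.mul_left h.commute_a_numberW

theorem commute_euler_angular (h : IsWeylPair z w a b) :
    Commute (euler z w a b) (angular z w a b) :=
  ((Commute.refl _).sub_right h.commute_numbers).add_left
    (h.commute_numbers.symm.sub_right (Commute.refl _))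

theorem semiconjBy_a_euler (h : IsWeylPair z w a b) :
    SemiconjBy a (euler z w a b) (euler z w a b + 1) := by
  simpa only [euler, add_right_comm] using h.semiconjBy_a_numberZ.add_right h.commute_a_numberW

theorem semiconjBy_a_angular (h : IsWeylPair z w a b) :
    SemiconjBy a (angular z w a b) (angular z w a b + 1) := by
  simpa only [angular, sub_add_eq_add_sub] using
    h.semiconjBy_a_numberZ.sub_right h.commute_a_numberW

theorem semiconjBy_a_angular_sub_one (h : IsWeylPair z w a b) :
    SemiconjBy a (angular z w a b - 1) (angular z w a b) := by
  simpa only [add_sub_cancel_right] using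
    h.semiconjBy_a_angular.sub_right (SemiconjBy.one_right a)

theorem semiconjBy_b_euler (h : IsWeylPair z w a b) :
    SemiconjBy b (euler z w a b) (euler z w a b + 1) := by
  simpa only [euler_swap z w] using h.swap.semiconjBy_a_euler

theorem semiconjBy_b_angular (h : IsWeylPair z w a b) :
    SemiconjBy b (angular z w a b) (angular z w a b - 1) := by
  simpa only [angular_swap z w, neg_neg, neg_add, sub_eq_add_neg] using
    h.swap.semiconjBy_a_angular.neg_right

theorem semiconjBy_z_angular (h : IsWeylPair z w a b) :
    SemiconjBy z (angular z w a b) (angular z w a b - 1) := by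
  simpa only [angular, sub_right_comm] using h.semiconjBy_z_numberZ.sub_right h.commute_z_numberW

theorem hamiltonian_swap (h : IsWeylPair z w a b) (F : R[X]) :
    hamiltonian F w z b a = hamiltonian F z w a b := by
  rw [hamiltonian, hamiltonian, euler_swap, h.commute_a_b.eq]

theorem commute_angular_hamiltonian (h : IsWeylPair z w a b) (F : R[X]) :
    Commute (angular z w a b) (hamiltonian F z w a b) := by
  have hab : Commute (angular z w a b) (a * b) :=
    Commute.symm (h.semiconjBy_a_angular_sub_one.mul_left h.semiconjBy_b_angular)
  exact (commute_aeval_right h.commute_euler_angular.symm F).sub_right (hab.smul_right 4)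

theorem semiconjBy_ladder_angular (h : IsWeylPair z w a b) (F : R[X]) :
    SemiconjBy (ladder F z w a b) (angular z w a b) (angular z w a b - 2) := by
  have hΔ : Commute (dividedDifference (euler z w a b) (-angular z w a b) F)
      (angular z w a b) :=
    (semiconjBy_dividedDifference h.commute_euler_angular.symm
      (Commute.refl (angular z w a b)).neg_right F).symm
  have hsub : SemiconjBy (dividedDifference (euler z w a b) (-angular z w a b) F * z - 2 • b)
      (angular z w a b) (angular z w a b - 1) := by
    rw [two_nsmul]
    exact ((hΔ.sub_right (Commute.one_right _)).semiconjBy.mul_left h.semiconjBy_z_angular).sub_left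
      (h.semiconjBy_b_angular.add_left h.semiconjBy_b_angular)
  have hshift := (hsub.sub_right (SemiconjBy.one_right _)).mul_left h.semiconjBy_b_angular
  rwa [sub_sub, one_add_one_eq_two] at hshift

theorem angular_mul_ladder (h : IsWeylPair z w a b) (F : R[X]) :
    angular z w a b * ladder F z w a b - ladder F z w a b * angular z w a b
      = 2 • ladder F z w a b := by
  rw [(h.semiconjBy_ladder_angular F).eq]
  noncomm_ring

theorem angular_mul_ladder_swap (h : IsWeylPair z w a b) (F : R[X]) :
    angular z w a b * ladder F w z b a - ladder F w z b a * angular z w a b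
      = -(2 • ladder F w z b a) := by
  rw [← h.swap.angular_mul_ladder F, angular_swap z w]
  noncomm_ring

theorem two_smul_ladder_factor_mul_a (h : IsWeylPair z w a b) (F : R[X]) :
    2 • ((dividedDifference (euler z w a b) (-angular z w a b) F * z - 2 • b) * a)
      = hamiltonian F z w a b - aeval (-angular z w a b) F := by
  have hΔ := dividedDifference_mul_sub h.commute_euler_angular.neg_right F
  rw [sub_neg_eq_add, euler_add_angular, mul_smul_comm, ← mul_assoc] at hΔ
  rw [sub_mul, smul_sub, hΔ, hamiltonian, smul_mul_assoc, h.commute_a_b.eq]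
  abel

theorem two_smul_b_mul_ladder_swap (h : IsWeylPair z w a b) (F : R[X]) :
    2 • (b * ladder F w z b a)
      = a * (hamiltonian F z w a b - aeval (angular z w a b - 2) F) := by
  have hbw : (euler z w a b + 1) - (angular z w a b - 1) = 2 • (b * w) := by
    rw [h.b_mul_w, euler, angular]; noncomm_ring
  have hcomm : Commute (euler z w a b + 1) (angular z w a b - 1) :=
    (h.commute_euler_angular.add_left (Commute.one_left _)).sub_right (Commute.one_right _)
  have hfactor : 2 • (b * (dividedDifference (euler z w a b) (angular z w a b) F * w - 2 • a))
      = aeval (euler z w a b + 1) F - aeval (angular z w a b - 1) F - 4 • (a * b) := by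
    rw [mul_sub, ← mul_assoc,
      (semiconjBy_dividedDifference h.semiconjBy_b_euler h.semiconjBy_b_angular F).eq, mul_assoc,
      smul_sub, ← mul_smul_comm, ← hbw, dividedDifference_mul_sub hcomm, mul_smul_comm,
      h.commute_a_b.eq]
    abel
  have ha : SemiconjBy a (angular z w a b - 2) (angular z w a b - 1) := by
    simpa only [sub_sub, one_add_one_eq_two] using
      h.semiconjBy_a_angular_sub_one.sub_right (SemiconjBy.one_right a)
  rw [ladder, angular_swap, neg_neg, euler_swap, ← mul_assoc, ← smul_mul_assoc, hfactor,
    hamiltonian, mul_sub, mul_sub, (semiconjBy_aeval h.semiconjBy_a_euler F).eq,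
    (semiconjBy_aeval ha F).eq, mul_smul_comm,
    sub_mul, sub_mul, smul_mul_assoc, mul_assoc a b a, h.commute_a_b.symm.eq]
  abel

theorem four_smul_ladder_mul_ladder_swap (h : IsWeylPair z w a b) (F : R[X]) :
    4 • (ladder F z w a b * ladder F w z b a)
      = (hamiltonian F z w a b - aeval (-angular z w a b) F)
        * (hamiltonian F z w a b - aeval (angular z w a b - 2) F) := by
  rw [← h.two_smul_ladder_factor_mul_a, smul_mul_assoc, mul_assoc _ a,
    ← h.two_smul_b_mul_ladder_swap, mul_smul_comm, ladder, mul_assoc, smul_smul]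
  norm_num

theorem a_mul_z_mul (h : IsWeylPair z w a b) (x : A) : a * (z * x) = z * (a * x) + x := by
  rw [← mul_assoc, h.a_mul_z, add_mul, one_mul, mul_assoc]

theorem b_mul_w_mul (h : IsWeylPair z w a b) (x : A) : b * (w * x) = w * (b * x) + x :=
  h.swap.a_mul_z_mul x

theorem ladderDrift_X_sq (h : IsWeylPair z w a b) :
    ladderDrift z w a b (X ^ 2 : R[X]) = 2 • (z * w * b ^ 2) := by
  simp only [ladderDrift_X_pow, Finset.sum_range_succ, Finset.sum_range_zero, euler, angular]
  noncomm_ring [h.commute_z_w.symm.eq, h.commute_z_w.symm.left_comm, h.commute_b_z.eq,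
    h.commute_b_z.left_comm]

theorem ladderDrift_X_cube (h : IsWeylPair z w a b) :
    ladderDrift z w a b (X ^ 3 : R[X])
      = 3 • (z * w ^ 2 * b ^ 3 + z * w * b ^ 2)
        + (z ^ 3 * (a ^ 2 * b) + 3 • (z ^ 2 * (a * b)) + z * b) := by
  simp only [ladderDrift_X_pow, Finset.sum_range_succ, Finset.sum_range_zero, euler, angular]
  noncomm_ring [h.commute_z_w.symm.eq, h.commute_z_w.symm.left_comm, h.commute_b_z.eq,
    h.commute_b_z.left_comm, h.commute_a_b.symm.eq, h.commute_a_b.symm.left_comm,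
    h.commute_a_w.eq, h.commute_a_w.left_comm, h.a_mul_z, h.a_mul_z_mul, h.b_mul_w, h.b_mul_w_mul]

theorem ladderDrift_X_pow_four (h : IsWeylPair z w a b) :
    ladderDrift z w a b (X ^ 4 : R[X])
      = 4 • (z * w ^ 3 * b ^ 4 + 3 • (z * w ^ 2 * b ^ 3) + 2 • (z * w * b ^ 2)
        + z ^ 3 * w * (a ^ 2 * b ^ 2) + 3 • (z ^ 2 * w * (a * b ^ 2))) := by
  simp only [ladderDrift_X_pow, Finset.sum_range_succ, Finset.sum_range_zero, euler, angular]
  noncomm_ring [h.commute_z_w.symm.eq, h.commute_z_w.symm.left_comm, h.commute_b_z.eq,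
    h.commute_b_z.left_comm, h.commute_a_b.symm.eq, h.commute_a_b.symm.left_comm,
    h.commute_a_w.eq, h.commute_a_w.left_comm, h.a_mul_z, h.a_mul_z_mul, h.b_mul_w, h.b_mul_w_mul]

end IsWeylPair

end Ladder

section PlaneOperators

open Polynomial

/-- Multiplication by the complex coordinate `z = q₁ + i q₂`. -/
def zOp : Module.End ℂ V := q1 + Complex.I • q2

/-- Multiplication by the complex coordinate `w = q₁ - i q₂`. -/
def wOp : Module.End ℂ V := q1 - Complex.I • q2

/-- The complex derivative `∂/∂z`. -/
def aOp : Module.End ℂ V := (Complex.I / 2) • (p1 - Complex.I • p2)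

/-- The complex derivative `∂/∂w`. -/
def bOp : Module.End ℂ V := (Complex.I / 2) • (p1 + Complex.I • p2)

theorem commute_q1_q2 : Commute q1 q2 := by
  refine LinearMap.ext fun f => ?_
  simp only [q1, q2, Module.End.mul_apply, LinearMap.mulLeft_apply]
  ring

theorem commute_p1_p2 : Commute p1 p2 := by
  have h : ⁅(MvPolynomial.pderiv 0 : Derivation ℂ V V),
      (MvPolynomial.pderiv 1 : Derivation ℂ V V)⁆ = 0 := by
    refine MvPolynomial.derivation_ext fun i => ?_
    fin_cases i <;> simp [Derivation.commutator_apply, MvPolynomial.pderiv_X]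
  refine LinearMap.ext fun f => ?_
  have hf := DFunLike.congr_fun h f
  simp only [Derivation.commutator_apply, Derivation.coe_zero, Pi.zero_apply, sub_eq_zero] at hf
  simp [p1, p2, hf]

theorem p1_mul_q1 : p1 * q1 = q1 * p1 - Complex.I • 1 := by
  refine LinearMap.ext fun f => ?_
  simp only [q1, p1, Module.End.mul_apply, LinearMap.sub_apply, LinearMap.smul_apply,
    LinearMap.mulLeft_apply, Module.End.one_apply, Derivation.coeFn_coe, Derivation.leibniz,
    MvPolynomial.pderiv_X_self, smul_eq_mul, mul_one, mul_smul_comm]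
  module

theorem p2_mul_q2 : p2 * q2 = q2 * p2 - Complex.I • 1 := by
  refine LinearMap.ext fun f => ?_
  simp only [q2, p2, Module.End.mul_apply, LinearMap.sub_apply, LinearMap.smul_apply,
    LinearMap.mulLeft_apply, Module.End.one_apply, Derivation.coeFn_coe, Derivation.leibniz,
    MvPolynomial.pderiv_X_self, smul_eq_mul, mul_one, mul_smul_comm]
  module

theorem commute_p1_q2 : Commute p1 q2 := by
  refine LinearMap.ext fun f => ?_
  simp [q2, p1]

theorem commute_p2_q1 : Commute p2 q1 := by
  refine LinearMap.ext fun f => ?_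
  simp [q1, p2]

theorem aOp_mul_zOp : aOp * zOp = zOp * aOp + 1 := by
  simp only [aOp, zOp, add_mul, mul_sub, mul_add, sub_mul, smul_mul_assoc, mul_smul_comm,
    p1_mul_q1, p2_mul_q2, commute_p1_q2.eq, commute_p2_q1.eq]
  match_scalars <;> grind [Complex.I_sq]

theorem bOp_mul_wOp : bOp * wOp = wOp * bOp + 1 := by
  simp only [bOp, wOp, add_mul, mul_sub, mul_add, sub_mul, smul_mul_assoc, mul_smul_comm,
    p1_mul_q1, p2_mul_q2, commute_p1_q2.eq, commute_p2_q1.eq]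
  match_scalars <;> grind [Complex.I_sq]

theorem commute_aOp_wOp : Commute aOp wOp := by
  simp only [Commute, SemiconjBy, aOp, wOp, mul_sub, sub_mul, smul_mul_assoc,
    mul_smul_comm, p1_mul_q1, p2_mul_q2, commute_p1_q2.eq, commute_p2_q1.eq]
  match_scalars <;> grind [Complex.I_sq]

theorem commute_bOp_zOp : Commute bOp zOp := by
  simp only [Commute, SemiconjBy, bOp, zOp, add_mul, mul_add, smul_mul_assoc,
    mul_smul_comm, p1_mul_q1, p2_mul_q2, commute_p1_q2.eq, commute_p2_q1.eq]
  match_scalars <;> grind [Complex.I_sq]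

theorem commute_zOp_wOp : Commute zOp wOp :=
  have h := commute_q1_q2.smul_right Complex.I
  ((Commute.refl q1).sub_right h).add_left (h.symm.sub_right (Commute.refl _))

theorem commute_aOp_bOp : Commute aOp bOp :=
  have h := commute_p1_p2.smul_right Complex.I
  ((((Commute.refl p1).add_right h).sub_left
    (h.symm.add_right (Commute.refl _))).smul_left _).smul_right _

theorem isWeylPair_complex : IsWeylPair zOp wOp aOp bOp :=
  ⟨commute_zOp_wOp, commute_aOp_bOp, commute_aOp_wOp, commute_bOp_zOp, aOp_mul_zOp, bOp_mul_wOp⟩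

theorem angular_complex : angular zOp wOp aOp bOp = Cop := by
  simp only [angular, Cop, aOp, bOp, zOp, wOp, add_mul, mul_sub, mul_add, sub_mul, smul_mul_assoc,
    mul_smul_comm]
  match_scalars <;> grind [Complex.I_sq]

theorem Dop_eq_smul_euler : Dop = -Complex.I • euler zOp wOp aOp bOp := by
  simp only [euler, Dop, aOp, bOp, zOp, wOp, add_mul, mul_sub, mul_add, sub_mul, smul_mul_assoc,
    mul_smul_comm]
  match_scalars <;> grind [Complex.I_sq]

theorem p1_eq : p1 = -Complex.I • (aOp + bOp) := by
  rw [aOp, bOp]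
  match_scalars <;> grind [Complex.I_sq]

theorem p2_eq : p2 = aOp - bOp := by
  rw [aOp, bOp]
  match_scalars <;> grind [Complex.I_sq]

theorem p1_sq_add_p2_sq : p1 ^ 2 + p2 ^ 2 = -(4 • (aOp * bOp)) := by
  have hab := commute_aOp_bOp.eq
  rw [p1_eq, p2_eq, _root_.smul_pow, neg_sq, Complex.I_sq, neg_one_smul]
  generalize aOp = a, bOp = b at *
  noncomm_ring [hab]

theorem p1_sq_sub_p2_sq : p1 ^ 2 - p2 ^ 2 = -(2 • bOp ^ 2 + 2 • aOp ^ 2) := by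
  have hab := commute_aOp_bOp.eq
  rw [p1_eq, p2_eq, _root_.smul_pow, neg_sq, Complex.I_sq, neg_one_smul]
  generalize aOp = a, bOp = b at *
  noncomm_ring [hab]

theorem C_I_sq : (MvPolynomial.C Complex.I : V) ^ 2 = -1 := by
  rw [← map_pow, Complex.I_sq, map_neg, map_one]

theorem aOp_bOp_apply (f : V) : aOp (bOp f) = bOp (aOp f) :=
  DFunLike.congr_fun commute_aOp_bOp.eq f

theorem exists_complex_coordinates : ∃ Z W : V,
    (∀ f, zOp f = 2 * Z * f) ∧ (∀ f, wOp f = 2 * W * f) ∧ (∀ f, q1 f = (Z + W) * f) ∧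
      ∀ f, q2 f = MvPolynomial.C (-Complex.I) * (Z - W) * f := by
  have hI := C_I_sq
  have h2 : 2 * (MvPolynomial.C (1 / 2) : V) = 1 := by
    rw [← map_ofNat MvPolynomial.C, ← map_mul]
    norm_num
  refine ⟨MvPolynomial.C (1 / 2) * (.X 0 + MvPolynomial.C Complex.I * .X 1),
    MvPolynomial.C (1 / 2) * (.X 0 - MvPolynomial.C Complex.I * .X 1), ?_, ?_, ?_, ?_⟩ <;>
  · intro f
    simp only [zOp, wOp, q1, q2, MvPolynomial.smul_eq_C_mul, LinearMap.add_apply,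
      LinearMap.sub_apply, LinearMap.smul_apply, LinearMap.mulLeft_apply, map_neg]
    grind

theorem linear_symmetry_sub :
    q1 * p1 - q2 * p2
      = -Complex.I • (ladderDrift zOp wOp aOp bOp (X : ℂ[X])
        + ladderDrift wOp zOp bOp aOp (X : ℂ[X])) := by
  rw [ladderDrift_X, ladderDrift_X]
  simp only [aOp, bOp, zOp, wOp, add_mul, mul_sub, mul_add, sub_mul, smul_mul_assoc,
    mul_smul_comm]
  match_scalars <;> grind [Complex.I_sq]

theorem quadratic_symmetry_sub :
    (q1 ^ 2 + q2 ^ 2) * p1 ^ 2 - (q1 ^ 2 + q2 ^ 2) * p2 ^ 2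
      = (-Complex.I) ^ 2 • (ladderDrift zOp wOp aOp bOp (X ^ 2 : ℂ[X])
        + ladderDrift wOp zOp bOp aOp (X ^ 2 : ℂ[X])) := by
  rw [isWeylPair_complex.ladderDrift_X_sq, isWeylPair_complex.swap.ladderDrift_X_sq]
  obtain ⟨Z, W, hz, hw, hq1, hq2⟩ := exists_complex_coordinates
  -- Both sides are normally ordered, so acting on a polynomial `f` turns the claim into a
  -- commutative identity between the coordinates and the derivatives of `f`.
  refine LinearMap.ext fun f => ?_
  simp only [p1_eq, p2_eq, pow_succ, pow_zero, one_mul, Module.End.mul_apply, LinearMap.add_apply,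
    LinearMap.sub_apply, LinearMap.smul_apply, map_add, map_sub, map_smul, aOp_bOp_apply, hz, hw,
    hq1, hq2]
  simp only [MvPolynomial.smul_eq_C_mul, map_mul, map_neg, nsmul_eq_mul, Nat.cast_ofNat]
  have hI := C_I_sq
  generalize (MvPolynomial.C Complex.I : V) = j at *
  grind only

theorem cubic_symmetry_sub :
    q1 ^ 3 * (p1 ^ 3 - p1 * p2 ^ 2) + (q2 ^ 3 + 3 * (q1 ^ 2 * q2)) * (p1 ^ 2 * p2)
        - (3 * Complex.I) • (q1 ^ 2 * p1 ^ 2) - (3 * Complex.I) • (q1 * q2 * p1 * p2) - q1 * p1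
      - (q2 ^ 3 * (p2 ^ 3 - p1 ^ 2 * p2) + (q1 ^ 3 + 3 * (q1 * q2 ^ 2)) * (p1 * p2 ^ 2)
        - (3 * Complex.I) • (q2 ^ 2 * p2 ^ 2) - (3 * Complex.I) • (q1 * q2 * p1 * p2) - q2 * p2)
      = (-Complex.I) ^ 3 • (ladderDrift zOp wOp aOp bOp (X ^ 3 : ℂ[X])
        + ladderDrift wOp zOp bOp aOp (X ^ 3 : ℂ[X])) := by
  rw [isWeylPair_complex.ladderDrift_X_cube, isWeylPair_complex.swap.ladderDrift_X_cube]
  obtain ⟨Z, W, hz, hw, hq1, hq2⟩ := exists_complex_coordinates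
  refine LinearMap.ext fun f => ?_
  simp only [p1_eq, p2_eq, pow_succ, pow_zero, one_mul, Module.End.mul_apply, LinearMap.add_apply,
    LinearMap.sub_apply, LinearMap.smul_apply, map_add, map_sub, map_smul, Module.End.ofNat_apply,
    aOp_bOp_apply, hz, hw, hq1, hq2]
  simp only [MvPolynomial.smul_eq_C_mul, map_mul, map_neg, map_ofNat, nsmul_eq_mul,
    Nat.cast_ofNat]
  have hI := C_I_sq
  generalize (MvPolynomial.C Complex.I : V) = j at *
  clear hz hw hq1 hq2
  grind only

theorem quartic_symmetry_sub :
    (q1 ^ 4 - q2 ^ 4) * (p1 ^ 4 - p1 ^ 2 * p2 ^ 2)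
        + 4 * ((q1 * q2 ^ 3 + q1 ^ 3 * q2) * (p1 ^ 3 * p2))
        - (6 * Complex.I) • ((q1 ^ 3 + q1 * q2 ^ 2) * p1 ^ 3)
        - (6 * Complex.I) • ((q2 ^ 3 + q1 ^ 2 * q2) * (p1 ^ 2 * p2))
        - 4 * ((q1 ^ 2 + q2 ^ 2) * p1 ^ 2)
      - ((q2 ^ 4 - q1 ^ 4) * (p2 ^ 4 - p1 ^ 2 * p2 ^ 2)
        + 4 * ((q1 ^ 3 * q2 + q1 * q2 ^ 3) * (p1 * p2 ^ 3))
        - (6 * Complex.I) • ((q2 ^ 3 + q1 ^ 2 * q2) * p2 ^ 3)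
        - (6 * Complex.I) • ((q1 ^ 3 + q1 * q2 ^ 2) * (p1 * p2 ^ 2))
        - 4 * ((q1 ^ 2 + q2 ^ 2) * p2 ^ 2))
      = (-Complex.I) ^ 4 • (ladderDrift zOp wOp aOp bOp (X ^ 4 : ℂ[X])
        + ladderDrift wOp zOp bOp aOp (X ^ 4 : ℂ[X])) := by
  rw [isWeylPair_complex.ladderDrift_X_pow_four,
    isWeylPair_complex.swap.ladderDrift_X_pow_four]
  obtain ⟨Z, W, hz, hw, hq1, hq2⟩ := exists_complex_coordinates
  refine LinearMap.ext fun f => ?_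
  simp only [p1_eq, p2_eq, pow_succ, pow_zero, one_mul, Module.End.mul_apply, LinearMap.add_apply,
    LinearMap.sub_apply, LinearMap.smul_apply, map_add, map_sub, map_smul, Module.End.ofNat_apply,
    aOp_bOp_apply, hz, hw, hq1, hq2]
  simp only [MvPolynomial.smul_eq_C_mul, map_mul, map_neg, map_ofNat, nsmul_eq_mul,
    Nat.cast_ofNat]
  have hI := C_I_sq
  generalize (MvPolynomial.C Complex.I : V) = j at *
  clear hz hw hq1 hq2
  grind only

end PlaneOperators

section Zernike

open Polynomial

/-- The polynomial `F(x) = ∑ γₖ (-i x)ᵏ`, for which `Ĥ₄` is `-4 ∂²/∂z∂w` plus `F` of the Euler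
operator. -/
def zernikePolynomial (γ₁ γ₂ γ₃ γ₄ : ℂ) : ℂ[X] :=
  γ₁ • -Complex.I • X + γ₂ • (-Complex.I) ^ 2 • X ^ 2 + γ₃ • (-Complex.I) ^ 3 • X ^ 3
    + γ₄ • (-Complex.I) ^ 4 • X ^ 4

variable (γ₁ γ₂ γ₃ γ₄ : ℂ)

theorem aeval_zernikePolynomial {A : Type*} [Ring A] [Algebra ℂ A] (x : A) :
    aeval x (zernikePolynomial γ₁ γ₂ γ₃ γ₄)
      = γ₁ • -Complex.I • x + γ₂ • (-Complex.I • x) ^ 2 + γ₃ • (-Complex.I • x) ^ 3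
        + γ₄ • (-Complex.I • x) ^ 4 := by
  simp only [zernikePolynomial, map_add, map_smul, map_pow, aeval_X, _root_.smul_pow]

theorem H4_eq_hamiltonian :
    H4 γ₁ γ₂ γ₃ γ₄ = hamiltonian (zernikePolynomial γ₁ γ₂ γ₃ γ₄) zOp wOp aOp bOp := by
  rw [H4, hamiltonian, aeval_zernikePolynomial, ← Dop_eq_smul_euler, p1_sq_add_p2_sq]
  abel

theorem K2_sub_smul_K1_sq :
    K2 γ₁ γ₂ γ₃ γ₄ - (γ₂ / 2 - 2 * γ₄) • K1 ^ 2
      = (1 / 2 : ℂ) • (ladder (zernikePolynomial γ₁ γ₂ γ₃ γ₄) zOp wOp aOp bOp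
        + ladder (zernikePolynomial γ₁ γ₂ γ₃ γ₄) wOp zOp bOp aOp) := by
  have hC : 4 * Cop ^ 2 = (4 : ℂ) • Cop ^ 2 := by rw [Algebra.smul_def, map_ofNat]
  simp only [K2, I4, I4', K1, ladder_eq_ladderDrift_sub, zernikePolynomial, map_add, map_smul, hC]
  linear_combination (norm := module) (1 / 2 : ℂ) • p1_sq_sub_p2_sq
    + (γ₁ / 2) • linear_symmetry_sub + (γ₂ / 2) • quadratic_symmetry_sub
    + (γ₃ / 2) • cubic_symmetry_sub + (γ₄ / 2) • quartic_symmetry_sub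

theorem K3_eq_ladder_sub_ladder :
    K3 γ₁ γ₂ γ₃ γ₄ = ladder (zernikePolynomial γ₁ γ₂ γ₃ γ₄) zOp wOp aOp bOp
      - ladder (zernikePolynomial γ₁ γ₂ γ₃ γ₄) wOp zOp bOp aOp := by
  have hP := isWeylPair_complex.angular_mul_ladder (zernikePolynomial γ₁ γ₂ γ₃ γ₄)
  have hM := isWeylPair_complex.angular_mul_ladder_swap (zernikePolynomial γ₁ γ₂ γ₃ γ₄)
  rw [angular_complex, ← K1] at hP hM
  rw [K3, sub_eq_iff_eq_add.mp (K2_sub_smul_K1_sq γ₁ γ₂ γ₃ γ₄)]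
  simp only [mul_add, add_mul, mul_smul_comm, smul_mul_assoc, ← pow_succ, ← pow_succ']
  linear_combination (norm := module) (1 / 2 : ℂ) • hP + (1 / 2 : ℂ) • hM

theorem Kplus_eq_ladder :
    Kplus γ₁ γ₂ γ₃ γ₄ = ladder (zernikePolynomial γ₁ γ₂ γ₃ γ₄) zOp wOp aOp bOp := by
  rw [Kplus, add_sub_right_comm, K2_sub_smul_K1_sq, K3_eq_ladder_sub_ladder]
  module

theorem Kminus_eq_ladder_swap :
    Kminus γ₁ γ₂ γ₃ γ₄ = ladder (zernikePolynomial γ₁ γ₂ γ₃ γ₄) wOp zOp bOp aOp := by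
  rw [Kminus, sub_right_comm, K2_sub_smul_K1_sq, K3_eq_ladder_sub_ladder]
  module

theorem Cop_eq_two_smul_Kop : Cop = 2 • Kop := by
  rw [Kop, K1]
  module

theorem commute_Cop_H4 : Commute Cop (H4 γ₁ γ₂ γ₃ γ₄) := by
  rw [H4_eq_hamiltonian, ← angular_complex]
  exact isWeylPair_complex.commute_angular_hamiltonian _

theorem commute_Kop_H4 : Commute Kop (H4 γ₁ γ₂ γ₃ γ₄) :=
  (commute_Cop_H4 γ₁ γ₂ γ₃ γ₄).smul_left _

theorem Phi1op_eq :
    Phi1op γ₁ γ₂ γ₃ γ₄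
      = (1 / 4 : ℂ) • (H4 γ₁ γ₂ γ₃ γ₄ - aeval (-Cop) (zernikePolynomial γ₁ γ₂ γ₃ γ₄)) := by
  rw [Phi1op, aeval_zernikePolynomial, Cop_eq_two_smul_Kop,
    show -Complex.I • -(2 • Kop) = (2 * Complex.I) • Kop by module]
  simp only [_root_.smul_pow]
  match_scalars <;> grind [Complex.I_sq]

theorem Phi2op_eq :
    Phi2op γ₁ γ₂ γ₃ γ₄
      = H4 γ₁ γ₂ γ₃ γ₄ - aeval (Cop - 2) (zernikePolynomial γ₁ γ₂ γ₃ γ₄) := by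
  rw [Phi2op, aeval_zernikePolynomial, Cop_eq_two_smul_Kop,
    show -Complex.I • (2 • Kop - 2) = (-2 * Complex.I) • (Kop - 1) by
      rw [← one_add_one_eq_two (R := Module.End ℂ V)]; module]
  generalize Kop - 1 = L
  simp only [_root_.smul_pow]
  match_scalars <;> grind [Complex.I_sq]

theorem commute_Phi1op_Phi2op : Commute (Phi1op γ₁ γ₂ γ₃ γ₄) (Phi2op γ₁ γ₂ γ₃ γ₄) := by
  have hH := commute_Cop_H4 γ₁ γ₂ γ₃ γ₄
  have hC : Commute (-Cop) (Cop - 2) :=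
    (Commute.refl Cop).neg_left.sub_right (Commute.ofNat_right _ 2)
  have hshift : Commute (H4 γ₁ γ₂ γ₃ γ₄) (Cop - 2) :=
    hH.symm.sub_right (Commute.ofNat_right _ 2)
  rw [Phi1op_eq, Phi2op_eq]
  refine (Commute.sub_right ?_ ?_).smul_left _
  · exact (Commute.refl _).sub_left (commute_aeval_right hH.symm.neg_right _).symm
  · exact (commute_aeval_right hshift _).sub_left
      (commute_aeval_right (commute_aeval_right hC.symm _).symm _)

theorem zernikePolynomial_commutator {A : Type*} [Ring A] [Algebra ℂ A] {H K : A}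
    (h : Commute H K) :
    (H - aeval (2 • K) (zernikePolynomial γ₁ γ₂ γ₃ γ₄))
          * (H - aeval (-(2 • K) - 2) (zernikePolynomial γ₁ γ₂ γ₃ γ₄))
        - (H - aeval (-(2 • K)) (zernikePolynomial γ₁ γ₂ γ₃ γ₄))
          * (H - aeval (2 • K - 2) (zernikePolynomial γ₁ γ₂ γ₃ γ₄))
      = 4 • ((2 * (γ₁ ^ 2 + 2 * Complex.I * γ₁ * γ₂ - 4 * γ₁ * γ₃
            - 8 * Complex.I * γ₁ * γ₄)) • K
        + (4 * (γ₂ + 3 * Complex.I * γ₃ - 8 * γ₄)) • (H * K)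
        + (16 * (γ₂ ^ 2 + 2 * γ₃ ^ 2 - 2 * γ₁ * γ₃ - 6 * Complex.I * γ₁ * γ₄
            + 2 * Complex.I * γ₂ * γ₃ - 8 * γ₂ * γ₄ + 4 * Complex.I * γ₃ * γ₄)) • K ^ 3
        - (32 * γ₄) • (H * K ^ 3)
        + (32 * (3 * γ₃ ^ 2 + 16 * γ₄ ^ 2 - 6 * γ₂ * γ₄
            + 6 * Complex.I * γ₃ * γ₄)) • K ^ 5
        + (512 * γ₄ ^ 2) • K ^ 7) := by
  obtain ⟨φ, rfl, rfl⟩ := exists_polynomial_algHom_of_commute (R := ℂ) h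
  have hI : algebraMap ℂ ℂ[X][X] Complex.I ^ 2 = -1 := by
    rw [← map_pow, Complex.I_sq, map_neg, map_one]
  simp only [← show φ 2 = 2 from map_ofNat φ 2, aeval_zernikePolynomial, ← map_smul,
    ← map_nsmul, ← map_neg, ← map_pow, ← map_mul, ← map_sub, ← map_add]
  congr 1
  simp only [Algebra.smul_def, map_add, map_sub, map_mul, map_neg, map_pow,
    map_ofNat]
  generalize algebraMap ℂ ℂ[X][X] Complex.I = j at *
  grind

theorem Kop_mul_Kplus_sub :
    Kop * Kplus γ₁ γ₂ γ₃ γ₄ - Kplus γ₁ γ₂ γ₃ γ₄ * Kop = Kplus γ₁ γ₂ γ₃ γ₄ := by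
  have h := isWeylPair_complex.angular_mul_ladder (zernikePolynomial γ₁ γ₂ γ₃ γ₄)
  rw [angular_complex, ← Kplus_eq_ladder] at h
  rw [Kop, K1, smul_mul_assoc, mul_smul_comm]
  linear_combination (norm := module) (1 / 2 : ℂ) • h

theorem Kop_mul_Kminus_sub :
    Kop * Kminus γ₁ γ₂ γ₃ γ₄ - Kminus γ₁ γ₂ γ₃ γ₄ * Kop = -Kminus γ₁ γ₂ γ₃ γ₄ := by
  have h := isWeylPair_complex.angular_mul_ladder_swap (zernikePolynomial γ₁ γ₂ γ₃ γ₄)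
  rw [angular_complex, ← Kminus_eq_ladder_swap] at h
  rw [Kop, K1, smul_mul_assoc, mul_smul_comm]
  linear_combination (norm := module) (1 / 2 : ℂ) • h

theorem four_smul_Kplus_mul_Kminus :
    4 • (Kplus γ₁ γ₂ γ₃ γ₄ * Kminus γ₁ γ₂ γ₃ γ₄)
      = (H4 γ₁ γ₂ γ₃ γ₄ - aeval (-Cop) (zernikePolynomial γ₁ γ₂ γ₃ γ₄))
        * (H4 γ₁ γ₂ γ₃ γ₄ - aeval (Cop - 2) (zernikePolynomial γ₁ γ₂ γ₃ γ₄)) := by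
  rw [Kplus_eq_ladder, Kminus_eq_ladder_swap, isWeylPair_complex.four_smul_ladder_mul_ladder_swap,
    ← H4_eq_hamiltonian, angular_complex]

theorem four_smul_Kminus_mul_Kplus :
    4 • (Kminus γ₁ γ₂ γ₃ γ₄ * Kplus γ₁ γ₂ γ₃ γ₄)
      = (H4 γ₁ γ₂ γ₃ γ₄ - aeval Cop (zernikePolynomial γ₁ γ₂ γ₃ γ₄))
        * (H4 γ₁ γ₂ γ₃ γ₄ - aeval (-Cop - 2) (zernikePolynomial γ₁ γ₂ γ₃ γ₄)) := by
  rw [Kplus_eq_ladder, Kminus_eq_ladder_swap,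
    isWeylPair_complex.swap.four_smul_ladder_mul_ladder_swap, isWeylPair_complex.hamiltonian_swap,
    ← H4_eq_hamiltonian, angular_swap, angular_complex, neg_neg]

theorem Kplus_mul_Kminus :
    Kplus γ₁ γ₂ γ₃ γ₄ * Kminus γ₁ γ₂ γ₃ γ₄ = Phi1op γ₁ γ₂ γ₃ γ₄ * Phi2op γ₁ γ₂ γ₃ γ₄ := by
  rw [Phi1op_eq, Phi2op_eq, smul_mul_assoc, ← four_smul_Kplus_mul_Kminus]
  module

end Zernike

/-- the seventh-order polynomial Higgs algebra generated by
`(K, K₊, K₋)` and the factorization `K₊K₋ = Φ₁Φ₂` with `⁅Φ₁,Φ₂⁆ = 0`. -/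
theorem quartic_zernike_higgs_algebra (γ₁ γ₂ γ₃ γ₄ : ℂ) :
    Kop * Kplus γ₁ γ₂ γ₃ γ₄ - Kplus γ₁ γ₂ γ₃ γ₄ * Kop = Kplus γ₁ γ₂ γ₃ γ₄ ∧
    Kop * Kminus γ₁ γ₂ γ₃ γ₄ - Kminus γ₁ γ₂ γ₃ γ₄ * Kop = -Kminus γ₁ γ₂ γ₃ γ₄ ∧
    Kminus γ₁ γ₂ γ₃ γ₄ * Kplus γ₁ γ₂ γ₃ γ₄ - Kplus γ₁ γ₂ γ₃ γ₄ * Kminus γ₁ γ₂ γ₃ γ₄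
      = (2 * (γ₁ ^ 2 + 2 * Complex.I * γ₁ * γ₂ - 4 * γ₁ * γ₃
            - 8 * Complex.I * γ₁ * γ₄)) • Kop
        + (4 * (γ₂ + 3 * Complex.I * γ₃ - 8 * γ₄)) • (H4 γ₁ γ₂ γ₃ γ₄ * Kop)
        + (16 * (γ₂ ^ 2 + 2 * γ₃ ^ 2 - 2 * γ₁ * γ₃ - 6 * Complex.I * γ₁ * γ₄
            + 2 * Complex.I * γ₂ * γ₃ - 8 * γ₂ * γ₄ + 4 * Complex.I * γ₃ * γ₄)) • Kop ^ 3
        - (32 * γ₄) • (H4 γ₁ γ₂ γ₃ γ₄ * Kop ^ 3)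
        + (32 * (3 * γ₃ ^ 2 + 16 * γ₄ ^ 2 - 6 * γ₂ * γ₄
            + 6 * Complex.I * γ₃ * γ₄)) • Kop ^ 5
        + (512 * γ₄ ^ 2) • Kop ^ 7 ∧
    Kplus γ₁ γ₂ γ₃ γ₄ * Kminus γ₁ γ₂ γ₃ γ₄ = Phi1op γ₁ γ₂ γ₃ γ₄ * Phi2op γ₁ γ₂ γ₃ γ₄ ∧
    Phi1op γ₁ γ₂ γ₃ γ₄ * Phi2op γ₁ γ₂ γ₃ γ₄
      - Phi2op γ₁ γ₂ γ₃ γ₄ * Phi1op γ₁ γ₂ γ₃ γ₄ = 0 := by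
  refine ⟨Kop_mul_Kplus_sub .., Kop_mul_Kminus_sub .., ?_, Kplus_mul_Kminus ..,
    sub_eq_zero.mpr (commute_Phi1op_Phi2op ..).eq⟩
  have hcomm := zernikePolynomial_commutator γ₁ γ₂ γ₃ γ₄ (commute_Kop_H4 γ₁ γ₂ γ₃ γ₄).symm
  rw [← Cop_eq_two_smul_Kop, ← four_smul_Kminus_mul_Kplus, ← four_smul_Kplus_mul_Kminus] at hcomm
  linear_combination (norm := module) (1 / 4 : ℂ) • hcomm
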